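/- For all words a, b, c ∈ M one has (ab)·c·(ba) = − c a² b² − b² a² c in A_{3,d}. -/

import Mathlib

open FreeAlgebra MulOpposite

/-- The alphabet: `(k, false)` is the letter `x_{k+1}`, `(k, true)` is `x_{k+1}ᵀ`. -/
abbrev Ltr (d : ℕ) := Fin d × Bool

/-- The free (unital) associative algebra on the `2d` letters.  The free non-unital
algebra `M_F` sits inside it as the span of the nonempty words. -/
abbrev FA (F : Type) [Field F] (d : ℕ) := FreeAlgebra F (Ltr d)

variable (F : Type) [Field F] (d : ℕ)

/-- The word in the free algebra corresponding to a list of letters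
(the empty list gives `1`, the unit). -/
def wordOf (l : List (Ltr d)) : FA F d := (l.map (FreeAlgebra.ι F)).prod

/-- The transpose: the linear anti-automorphism with `x ↦ xᵀ`, `xᵀ ↦ x`. -/
def tp (a : FA F d) : FA F d :=
  ((FreeAlgebra.lift F fun p : Ltr d => op (FreeAlgebra.ι F (p.1, !p.2))) a).unop

/-- `ā = a - aᵀ`. -/
def bar (a : FA F d) : FA F d := a - tp F d a

/-- `T(a,b,c) = a b̄ c̄ + b̄ aᵀ c̄ + b̄ c̄ a`. -/
def Trel (a b c : FA F d) : FA F d :=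
  a * bar F d b * bar F d c + bar F d b * tp F d a * bar F d c + bar F d b * bar F d c * a

/-- The copy of the free non-unital algebra `M_F`, i.e. the span of the nonempty words. -/
def MFsub : Submodule F (FA F d) :=
  Submodule.span F {w | ∃ l : List (Ltr d), l ≠ [] ∧ w = wordOf F d l}

/-- The two-sided ideal such that `A_{3,d} = M_F / (idealA ∩ M_F)`: it is generated by
`a³` for `a ∈ M_F` together with `T(a,b,c)` for `a, b, c ∈ M_F`.  (Since all generators lie in
`M_F`, its intersection with `M_F` is exactly the two-sided ideal of the non-unital algebra
`M_F` generated by these elements; in fact it is contained in `M_F`.)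
An element `u ∈ M_F` is zero in `A_{3,d}` iff `u ∈ idealA F d`. -/
def idealA : TwoSidedIdeal (FA F d) :=
  TwoSidedIdeal.span
    ({x | ∃ a ∈ MFsub F d, x = a ^ 3} ∪
     {x | ∃ a ∈ MFsub F d, ∃ b ∈ MFsub F d, ∃ c ∈ MFsub F d, x = Trel F d a b c})

/-!
Let all cubes vanish. Comparing the cubes of `x + y` and `x + ty`, with `t(t - 1)` invertible (for
instance `t = -1`), gives the sandwich rule `xyx = -x²y - yx²`.
Applying it to the inner factor of `(xy)z(yx) = x(yzy)x`, and then to the outer one, yields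
`x²y²z + y²zx² + x²zy² + zy²x²`. These are four of the six products of `x²`, `y²`, `z` in some
order; by the full linearization of `x³ = 0` all six sum to zero, so what remains is
`-zx²y² - y²x²z`.
-/

section NilIndexThree

variable {A : Type*} [NonUnitalRing A]

lemma sum_perm_mul_eq_zero_of_cube_eq_zero (hA : ∀ x : A, x * x * x = 0) (x y z : A) :
    x * y * z + x * z * y + y * x * z + y * z * x + z * x * y + z * y * x = 0 :=
  calc
    _ = (x + y + z) * (x + y + z) * (x + y + z)
        - (x + y) * (x + y) * (x + y) - (x + z) * (x + z) * (x + z)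
        - (y + z) * (y + z) * (y + z) + x * x * x + y * y * y + z * z * z := by noncomm_ring
    _ = 0 := by simp only [hA, sub_zero, add_zero]

variable {K : Type*} [CommRing K] [Module K A] [IsScalarTower K A A] [SMulCommClass K A A] {t : K}

lemma mul_mul_self_eq_of_cube_eq_zero (ht : IsSMulRegular A (t * (t - 1)))
    (hA : ∀ x : A, x * x * x = 0) (x y : A) :
    x * y * x = -(x * x * y) - y * (x * x) := by
  set p := x * x * y + x * y * x + y * (x * x) with hp
  set q := y * y * x + y * x * y + x * (y * y) with hq
  have polarize (s : K) : s • p + (s * s) • q = 0 :=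
    calc
      _ = (x + s • y) * (x + s • y) * (x + s • y) - x * x * x - (s * s * s) • (y * y * y) := by
        simp only [hp, hq, add_mul, mul_add, smul_mul_assoc, mul_smul_comm, smul_add, smul_smul,
          mul_assoc]
        abel
      _ = 0 := by simp only [hA, smul_zero, sub_zero]
  have q_eq : q = -p := by simpa [add_eq_zero_iff_neg_eq, eq_comm] using polarize 1
  have p_eq_zero : p = 0 := ht.right_eq_zero_of_smul <|
    calc
      (t * (t - 1)) • p = -(t • p + (t * t) • q) := by rw [q_eq]; module
      _ = 0 := by rw [polarize, neg_zero]
  calc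
    x * y * x = p - x * x * y - y * (x * x) := by rw [hp]; abel
    _ = -(x * x * y) - y * (x * x) := by rw [p_eq_zero, zero_sub]

theorem mul_mul_mul_mul_self_eq_of_cube_eq_zero (ht : IsSMulRegular A (t * (t - 1)))
    (hA : ∀ x : A, x * x * x = 0) (x y z : A) :
    x * y * z * (y * x) = -(z * (x * x) * (y * y)) - y * y * (x * x) * z := by
  have sandwich := mul_mul_self_eq_of_cube_eq_zero ht hA
  calc
    x * y * z * (y * x) = x * (y * z * y) * x := by noncomm_ring
    _ = -(x * (y * y * z) * x) - x * (z * (y * y)) * x := by rw [sandwich y z]; noncomm_ring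
    _ = x * x * (y * y * z) + y * y * z * (x * x)
        + (x * x * (z * (y * y)) + z * (y * y) * (x * x)) := by
      rw [sandwich x (y * y * z), sandwich x (z * (y * y))]; abel
    _ = -(z * (x * x) * (y * y)) - y * y * (x * x) * z := by
      rw [← sub_eq_zero, ← sum_perm_mul_eq_zero_of_cube_eq_zero hA (x * x) (y * y) z]; noncomm_ring

end NilIndexThree

theorem stmt6_general {K A : Type*} [CommRing K] [Ring A] [Algebra K A] {t : K}
    (ht : IsUnit (t * (t - 1))) (S : NonUnitalSubalgebra K A) (I : TwoSidedIdeal A)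
    (cube_mem : ∀ x ∈ S, x ^ 3 ∈ I) {x y z : A} (hx : x ∈ S) (hy : y ∈ S) (hz : z ∈ S) :
    x * y * z * (y * x) + z * x ^ 2 * y ^ 2 + y ^ 2 * x ^ 2 * z ∈ I := by
  let π := I.ringCon.mkₐ K
  have π_eq_zero {u : A} : π u = 0 ↔ u ∈ I := RingCon.eq _
  have cube_eq_zero (w : S.map π) : w * w * w = 0 := by
    obtain ⟨_, u, hu, rfl⟩ := w
    have : π u * π u * π u = 0 := by
      rw [← pow_three', ← map_pow, π_eq_zero]
      exact cube_mem u hu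
    exact Subtype.ext this
  have key : π x * π y * π z * (π y * π x) =
      -(π z * (π x * π x) * (π y * π y)) - π y * π y * (π x * π x) * π z :=
    congrArg Subtype.val <| mul_mul_mul_mul_self_eq_of_cube_eq_zero
      (ht.isSMulRegular (S.map π)) cube_eq_zero
      ⟨π x, x, hx, rfl⟩ ⟨π y, y, hy, rfl⟩ ⟨π z, z, hz, rfl⟩
  rw [← π_eq_zero]
  simp only [map_add, map_mul, sq, key]
  abel

section FreeMonoidAlgebra

variable {F d}

lemma wordOf_append (l m : List (Ltr d)) : wordOf F d (l ++ m) = wordOf F d l * wordOf F d m := by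
  simp only [wordOf, List.map_append, List.prod_append]

lemma wordOf_mem_MFsub {l : List (Ltr d)} (hl : l ≠ []) : wordOf F d l ∈ MFsub F d :=
  Submodule.subset_span ⟨l, hl, rfl⟩

variable (F d) in
/-- `M_F` as a non-unital subalgebra of the free unital algebra. -/
def MFsubalgebra : NonUnitalSubalgebra F (FA F d) where
  __ := MFsub F d
  mul_mem' {x y} hx hy := by
    have : MFsub F d * MFsub F d ≤ MFsub F d := by
      rw [MFsub, Submodule.span_mul_span, Submodule.span_le]
      rintro _ ⟨_, ⟨l, hl, rfl⟩, _, ⟨m, -, rfl⟩, rfl⟩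
      exact Submodule.subset_span ⟨l ++ m, by simp [hl], (wordOf_append l m).symm⟩
    exact this (Submodule.mul_mem_mul hx hy)

lemma pow_three_mem_idealA {x : FA F d} (hx : x ∈ MFsubalgebra F d) : x ^ 3 ∈ idealA F d :=
  TwoSidedIdeal.subset_span (Or.inl ⟨x, hx, rfl⟩)

end FreeMonoidAlgebra

/-- `(ab)·c·(ba) = − c a² b² − b² a² c` in `A_{3,d}` for all words `a, b, c`. -/
theorem stmt6 (F : Type) [Field F] [Infinite F] (h2 : ringChar F ≠ 2) (d : ℕ)
    (a b c : List (Ltr d)) (ha : a ≠ []) (hb : b ≠ []) (hc : c ≠ []) :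
    wordOf F d a * wordOf F d b * wordOf F d c * (wordOf F d b * wordOf F d a) +
      wordOf F d c * wordOf F d a ^ 2 * wordOf F d b ^ 2 +
      wordOf F d b ^ 2 * wordOf F d a ^ 2 * wordOf F d c ∈ idealA F d := by
  exact stmt6_general (t := -1) (by norm_num [Ring.two_ne_zero h2]) (MFsubalgebra F d) (idealA F d)
    (fun _ => pow_three_mem_idealA)
    (wordOf_mem_MFsub ha) (wordOf_mem_MFsub hb) (wordOf_mem_MFsub hc)
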